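/- Let V₀, V_h ∈ ℝ with V̄ := V_h - V₀ ≠ 0, V_c := (V₀ + V_h)/2, and let 0 ≤ x₁ ≤ x₂ ≤ h. Define the piecewise linear potential V̂ equal to the linear interpolation from V₀ to V_c on [0,x₁], constantly V_c on [x₁,x₂], and the linear interpolation from V_c to V_h on [x₂,h]. Set α = x₁/h, β = (h - x₂)/h. If α/β = (e^{V̄/2} - V̄/2 - 1)/(e^{-V̄/2} + V̄/2 - 1), then (1/h)∫₀^h e^{V̂(x)} dx = e^{(V₀+V_h)/2}, i.e., the harmonic integral average of π = e^{-V̂} equals the geometric mean √(π₀ π_h). -/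

import Mathlib

theorem sqra_aux_int (p c q a b : ℝ) (hc : c ≠ 0) :
    ∫ x in a..b, Real.exp (p + c * (x - q)) =
      (Real.exp (p + c * (b - q)) - Real.exp (p + c * (a - q))) / c := by
  have key : ∀ x ∈ Set.uIcc a b,
      HasDerivAt (fun x => Real.exp (p + c * (x - q)) / c) (Real.exp (p + c * (x - q))) x := by
    intro x _
    have h1 : HasDerivAt (fun x : ℝ => p + c * (x - q)) (c * 1) x :=
      (((hasDerivAt_id x).sub_const q).const_mul c).const_add p
    have h2 := (h1.exp).div_const c
    rw [mul_one, mul_div_assoc, div_self hc, mul_one] at h2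
    exact h2
  rw [intervalIntegral.integral_eq_sub_of_hasDerivAt key
    ((by fun_prop : Continuous fun x => Real.exp (p + c * (x - q))).intervalIntegrable _ _)]
  ring

theorem sqra_aux_piece (f g : ℝ → ℝ) (a b : ℝ) (hab : a ≤ b) (hg : Continuous g)
    (hfg : ∀ x, a ≤ x → x ≤ b → f x = g x) :
    IntervalIntegrable f MeasureTheory.volume a b ∧ ∫ x in a..b, f x = ∫ x in a..b, g x := by
  constructor
  · refine (hg.intervalIntegrable a b).congr ?_
    intro x hx
    rw [Set.uIoc_of_le hab] at hx
    exact (hfg x hx.1.le hx.2).symm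
  · apply intervalIntegral.integral_congr
    intro x hx
    rw [Set.uIcc_of_le hab] at hx
    exact hfg x hx.1 hx.2

/-- The piecewise affine potential rising from `V₀` to `V_c := (V₀+V_h)/2` on `[0,x₁]`,
constant `V_c` on `[x₁,x₂]`, and rising from `V_c` to `V_h` on `[x₂,h]`, with
`α = x₁/h`, `β = (h-x₂)/h` satisfying the ratio condition
`α/β = (e^{V̄/2} - V̄/2 - 1)/(e^{-V̄/2} + V̄/2 - 1)` (with `V̄ = V_h - V₀ ≠ 0`),
generates the SQRA (geometric) mean: `(1/h)∫₀ʰ e^{V̂} = e^{(V₀+V_h)/2}`. -/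
theorem sqra_mean_from_piecewise_potential (h x₁ x₂ V₀ Vh : ℝ)
    (hh : 0 < h) (h0 : 0 ≤ x₁) (h12 : x₁ ≤ x₂) (h2h : x₂ ≤ h)
    (hV : Vh - V₀ ≠ 0)
    (hratio : (x₁ / h) / ((h - x₂) / h) =
      (Real.exp ((Vh - V₀) / 2) - (Vh - V₀) / 2 - 1) /
        (Real.exp (-(Vh - V₀) / 2) + (Vh - V₀) / 2 - 1)) :
    (1 / h) * ∫ x in (0:ℝ)..h,
        Real.exp (if x ≤ x₁ then V₀ + ((V₀ + Vh) / 2 - V₀) / x₁ * x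
          else if x ≤ x₂ then (V₀ + Vh) / 2
          else (V₀ + Vh) / 2 + (Vh - (V₀ + Vh) / 2) / (h - x₂) * (x - x₂)) =
      Real.exp ((V₀ + Vh) / 2) := by
  obtain ⟨d, hd⟩ : ∃ d, d = (Vh - V₀) / 2 := ⟨_, rfl⟩
  have hd0 : d ≠ 0 := by rw [hd]; exact div_ne_zero hV two_ne_zero
  have hVc : (V₀ + Vh) / 2 = V₀ + d := by rw [hd]; ring
  have hVh : Vh = V₀ + d + d := by rw [hd]; ring
  have hneg : -(Vh - V₀) / 2 = -d := by rw [hd]; ring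
  rw [hneg, ← hd] at hratio
  have hA : 0 < Real.exp d - d - 1 := by linarith [Real.add_one_lt_exp hd0]
  have hB : 0 < Real.exp (-d) + d - 1 := by
    linarith [Real.add_one_lt_exp (neg_ne_zero.mpr hd0)]
  have hpos := div_pos hA hB
  rw [← hratio] at hpos
  have hx1 : 0 < x₁ := by
    rcases h0.eq_or_lt with h | h
    · rw [← h] at hpos; simp at hpos
    · exact h
  have hx2 : 0 < h - x₂ := by
    rcases (sub_nonneg.mpr h2h).eq_or_lt with h | h
    · rw [← h] at hpos; simp at hpos
    · exact h
  have e1 : (V₀ + Vh) / 2 - V₀ = d := by rw [hVc]; ring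
  have e2 : Vh - (V₀ + Vh) / 2 = d := by rw [hd]; ring
  rw [e1, e2, hVc]
  set f : ℝ → ℝ := fun x => Real.exp (if x ≤ x₁ then V₀ + d / x₁ * x
          else if x ≤ x₂ then V₀ + d
          else V₀ + d + d / (h - x₂) * (x - x₂)) with hf
  have p1 := sqra_aux_piece f (fun x => Real.exp (V₀ + d / x₁ * (x - 0))) 0 x₁ h0
    (by fun_prop) (by
      intro x _ hx
      simp [hf, hx])
  have p2 := sqra_aux_piece f (fun _ => Real.exp (V₀ + d)) x₁ x₂ h12
    (by fun_prop) (by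
      intro x hx hx'
      rcases hx.eq_or_lt with h | h
      · subst h
        simp [hf, hx1.ne']
      · simp [hf, not_le.mpr h, hx'])
  have p3 := sqra_aux_piece f (fun x => Real.exp (V₀ + d + d / (h - x₂) * (x - x₂))) x₂ h h2h
    (by fun_prop) (by
      intro x hx hx'
      rcases hx.eq_or_lt with h | h
      · subst h
        rcases h12.eq_or_lt with h' | h'
        · subst h'
          simp [hf, hx1.ne']
        · simp [hf, not_le.mpr h']
      · simp [hf, not_le.mpr h, not_le.mpr (h12.trans_lt h)])
  rw [← intervalIntegral.integral_add_adjacent_intervals (p1.1.trans p2.1) p3.1,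
    ← intervalIntegral.integral_add_adjacent_intervals p1.1 p2.1, p1.2, p2.2, p3.2,
    sqra_aux_int _ _ _ _ _ (div_ne_zero hd0 hx1.ne'),
    sqra_aux_int _ _ _ _ _ (div_ne_zero hd0 hx2.ne'), intervalIntegral.integral_const]
  have s1 : V₀ + d / x₁ * (x₁ - 0) = V₀ + d := by field_simp; ring
  have s2 : V₀ + d / x₁ * (0 - 0) = V₀ + d + -d := by ring
  have s3 : V₀ + d + d / (h - x₂) * (h - x₂) = V₀ + d + d := by
    rw [div_mul_cancel₀ _ hx2.ne']
  have s4 : V₀ + d + d / (h - x₂) * (x₂ - x₂) = V₀ + d := by ring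
  rw [s1, s2, s3, s4, Real.exp_add (V₀ + d) (-d), Real.exp_add (V₀ + d) d, smul_eq_mul]
  rw [div_div_div_cancel_right₀ hh.ne', div_eq_div_iff hx2.ne' hB.ne'] at hratio
  generalize Real.exp (V₀ + d) = E at *
  generalize Real.exp d = P at *
  generalize Real.exp (-d) = N at *
  rw [div_div_eq_mul_div, div_div_eq_mul_div]
  field_simp
  linear_combination (-E) * hratio
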